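/- Consider the two-player linear system ẋ = A x + B_i u_i + B_j u_j, x(0) = x₀, with costs J_k(u_k, u_{−k}) = ∫₀^∞ (xᵀ Q_k x + u_kᵀ u_k) dt for k ∈ {i, j}, where Q_i, Q_j are symmetric positive semidefinite. Suppose P_i, P_j are symmetric matrices solving the coupled algebraic Riccati equations 0 = (A − B_j B_jᵀ P_j)ᵀ P_i + P_i (A − B_j B_jᵀ P_j) − P_i B_i B_iᵀ P_i + Q_i and 0 = (A − B_i B_iᵀ P_i)ᵀ P_j + P_j (A − B_i B_iᵀ P_i) − P_j B_j B_jᵀ P_j + Q_j, and that the closed-loop matrix A − B_i B_iᵀ P_i − B_j B_jᵀ P_j is Hurwitz. Then the feedback policies u_k*(t) = −B_kᵀ P_k x(t) form a Nash equilibrium among asymptotically vanishing responses: for each k ∈ {i, j} and every continuous control u_k whose state trajectory under ẋ = A x + B_k u_k + B_{−k} u_{−k}*, x(0) = x₀, converges to 0 with convergent cost integrals, J_k(u_k, u_{−k}*) ≥ J_k(u_k*, u_{−k}*) = x₀ᵀ P_k x₀. -/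

import Mathlib

open Matrix MeasureTheory Filter

/-- A real square matrix is Hurwitz if every eigenvalue (over ℂ) has strictly
negative real part. -/
def IsHurwitz {n : ℕ} (A : Matrix (Fin n) (Fin n) ℝ) : Prop :=
  ∀ μ ∈ spectrum ℂ (A.map (algebraMap ℝ ℂ)), μ.re < 0

open Polynomial in
/-- Scalar decay with vanishing forcing. -/
lemma decay_aux {n : ℕ} (l : ℂ) (hl : l.re < 0) (y g : ℝ → Fin n → ℂ)
    (hy : ∀ t : ℝ, 0 ≤ t → HasDerivAt y (l • y t + g t) t)
    (hg : Tendsto g atTop (nhds 0)) : Tendsto y atTop (nhds 0) := by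
  have ha : 0 < -l.re := by linarith
  set a : ℝ := -l.re with ha_def
  rw [Metric.tendsto_atTop]
  intro e he
  rw [Metric.tendsto_atTop] at hg
  obtain ⟨T0, hT0⟩ := hg (a * (e / 2)) (by positivity)
  set T := max T0 0 with hT
  have hT0' : 0 ≤ T := le_max_right _ _
  set h : ℝ → Fin n → ℂ := fun t => Complex.exp (-l * t) • y t with hh
  have hexp : ∀ t : ℝ, ‖Complex.exp (-l * t)‖ = Real.exp (a * t) := by
    intro t
    rw [Complex.norm_exp]
    simp [ha_def]
  have hd : ∀ t : ℝ, 0 ≤ t → HasDerivAt h (Complex.exp (-l * t) • g t) t := by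
    intro t ht
    have h1 : HasDerivAt (fun t : ℝ => Complex.exp (-l * t)) (Complex.exp (-l * t) * (-l)) t := by
      have h2 : HasDerivAt (fun t : ℝ => -l * (t : ℂ)) (-l) t := by
        simpa using (Complex.ofRealCLM.hasDerivAt (x := t)).const_mul (-l)
      exact h2.cexp
    have h3 := h1.smul (hy t ht)
    refine h3.congr_deriv ?_
    rw [smul_add, smul_smul, mul_neg, neg_smul]
    abel
  have hbd : ∀ t, T ≤ t → ‖h t‖ ≤ ‖h T‖ + e / 2 * (Real.exp (a * t) - Real.exp (a * T)) := by
    intro t ht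
    refine image_norm_le_of_norm_deriv_right_le_deriv_boundary (a := T) (b := t)
      (f' := fun t => Complex.exp (-l * t) • g t)
      (B := fun t => ‖h T‖ + e / 2 * (Real.exp (a * t) - Real.exp (a * T)))
      (B' := fun t => e / 2 * (Real.exp (a * t) * a)) ?_ ?_ ?_ ?_ ?_ ⟨ht, le_rfl⟩
    · intro s hs
      exact (hd s (hT0'.trans hs.1)).continuousAt.continuousWithinAt
    · intro s hs
      exact (hd s (hT0'.trans hs.1)).hasDerivWithinAt
    · simp
    · intro s
      have h2 : HasDerivAt (fun t : ℝ => a * t) a s := by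
        simpa using (hasDerivAt_id s).const_mul a
      exact ((h2.exp.sub_const _).const_mul _).const_add _
    · intro s hs
      have := hT0 s ((le_max_left _ _).trans hs.1)
      rw [dist_zero_right] at this
      rw [norm_smul, hexp]
      have := mul_le_mul_of_nonneg_left this.le (Real.exp_pos (a * s)).le
      linarith
  have hlim : Tendsto (fun t : ℝ => Real.exp (-(a * t)) * ‖h T‖) atTop (nhds 0) := by
    have h1 : Tendsto (fun t : ℝ => a * t) atTop atTop := tendsto_id.const_mul_atTop ha
    simpa using (Real.tendsto_exp_neg_atTop_nhds_zero.comp h1).mul_const ‖h T‖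
  rw [Metric.tendsto_atTop] at hlim
  obtain ⟨T1, hT1⟩ := hlim (e / 2) (by positivity)
  refine ⟨max T T1, fun t ht => ?_⟩
  have h1 := hbd t ((le_max_left _ _).trans ht)
  have h2 := hT1 t ((le_max_right _ _).trans ht)
  rw [dist_zero_right, Real.norm_eq_abs] at h2
  have h2 := (abs_lt.1 h2).2
  rw [dist_zero_right]
  have h3 : ‖h t‖ = Real.exp (a * t) * ‖y t‖ := by
    rw [hh]; simp only [norm_smul, hexp]
  have h4 : Real.exp (-(a * t)) * Real.exp (a * t) = 1 := by
    rw [← Real.exp_add]; simp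
  have h5 : ‖y t‖ = Real.exp (-(a * t)) * ‖h t‖ := by
    rw [h3, ← mul_assoc, h4, one_mul]
  have h6 := mul_le_mul_of_nonneg_left h1 (Real.exp_pos (-(a * t))).le
  have h7 : 0 < e / 2 * (Real.exp (-(a * t)) * Real.exp (a * T)) := by positivity
  rw [h5]
  nlinarith

open Polynomial in
lemma decay_poly {n : ℕ} (M : Matrix (Fin n) (Fin n) ℂ) (s : Multiset ℂ) :
    (∀ a ∈ s, a.re < 0) → ∀ z : ℝ → Fin n → ℂ,
    (∀ t : ℝ, 0 ≤ t → HasDerivAt z (M *ᵥ z t) t) →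
    (∀ t : ℝ, 0 ≤ t → (aeval M (s.map (fun a => X - C a)).prod) *ᵥ z t = 0) →
    Tendsto z atTop (nhds 0) := by
  induction s using Multiset.induction_on with
  | empty =>
    intro _ z _ h
    refine tendsto_const_nhds.congr' ?_
    filter_upwards [eventually_ge_atTop 0] with t ht
    simpa using (h t ht).symm
  | cons a s ih =>
    intro hs z hz h
    have hw : Tendsto (fun t => (M - a • (1 : Matrix (Fin n) (Fin n) ℂ)) *ᵥ z t) atTop
        (nhds 0) := by
      apply ih (fun b hb => hs b (Multiset.mem_cons_of_mem hb))
      · intro t ht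
        have h1 := ((Matrix.mulVecLin (M - a • (1 : Matrix (Fin n) (Fin n) ℂ))).toContinuousLinearMap.restrictScalars ℝ).hasFDerivAt.comp_hasDerivAt t (hz t ht)
        refine h1.congr_deriv ?_
        simp [Matrix.mulVec_mulVec, Matrix.mulVec_sub, Matrix.mulVec_smul, Matrix.sub_mulVec, Matrix.smul_mulVec]
      · intro t ht
        have := h t ht
        rw [Multiset.map_cons, Multiset.prod_cons, mul_comm, map_mul, ← Matrix.mulVec_mulVec] at this
        rw [← this]
        simp [Algebra.algebraMap_eq_smul_one]
    refine decay_aux a (hs a (Multiset.mem_cons_self _ _)) z _ (fun t ht => ?_) hw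
    refine (hz t ht).congr_deriv ?_
    simp [Matrix.sub_mulVec, Matrix.smul_mulVec]

lemma hurwitz_decay {n : ℕ} (M : Matrix (Fin n) (Fin n) ℝ) (hM : IsHurwitz M)
    (x : ℝ → Fin n → ℝ) (hx : ∀ t : ℝ, 0 ≤ t → HasDerivAt x (M *ᵥ x t) t) :
    Tendsto x atTop (nhds 0) := by
  set N := M.map (algebraMap ℝ ℂ) with hN
  have hz : Tendsto (fun t => fun k => ((x t k : ℝ) : ℂ)) atTop (nhds (0 : Fin n → ℂ)) := by
    refine decay_poly N N.charpoly.roots ?_ _ ?_ ?_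
    · intro a ha
      apply hM
      rw [Matrix.mem_spectrum_iff_isRoot_charpoly]
      exact Polynomial.isRoot_of_mem_roots ha
    · intro t ht
      rw [hasDerivAt_pi]
      intro k
      have h1 := (hasDerivAt_pi.1 (hx t ht) k).ofReal_comp
      refine h1.congr_deriv ?_
      simp [hN, Matrix.mulVec, dotProduct]
    · intro t ht
      have h1 := (IsAlgClosed.splits N.charpoly).eq_prod_roots_of_monic N.charpoly_monic
      rw [← h1, Matrix.aeval_self_charpoly, Matrix.zero_mulVec]
  rw [tendsto_pi_nhds] at hz ⊢
  intro k
  have := (Complex.continuous_re.tendsto _).comp (hz k)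
  simpa [Function.comp_def] using this

lemma quad_deriv {n : ℕ} (P : Matrix (Fin n) (Fin n) ℝ) (x : ℝ → Fin n → ℝ) (d : Fin n → ℝ)
    (t : ℝ) (hx : HasDerivAt x d t) :
    HasDerivAt (fun t => x t ⬝ᵥ P *ᵥ x t) (d ⬝ᵥ P *ᵥ x t + x t ⬝ᵥ P *ᵥ d) t := by
  have h1 : HasDerivAt (fun t => P *ᵥ x t) (P *ᵥ d) t :=
    (Matrix.mulVecLin P).toContinuousLinearMap.hasFDerivAt.comp_hasDerivAt t hx
  have h2 : HasDerivAt (fun t => ∑ k, x t k * (P *ᵥ x t) k)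
      (∑ k, (d k * (P *ᵥ x t) k + x t k * (P *ᵥ d) k)) t :=
    HasDerivAt.fun_sum fun k _ => (hasDerivAt_pi.1 hx k).mul (hasDerivAt_pi.1 h1 k)
  simpa [dotProduct, Finset.sum_add_distrib] using h2

lemma quad_tendsto {n : ℕ} (P : Matrix (Fin n) (Fin n) ℝ) (x : ℝ → Fin n → ℝ)
    (hx : Tendsto x atTop (nhds 0)) :
    Tendsto (fun t => x t ⬝ᵥ P *ᵥ x t) atTop (nhds 0) := by
  have hc : Continuous (fun v : Fin n → ℝ => v ⬝ᵥ P *ᵥ v) := by fun_prop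
  simpa [Function.comp_def] using (hc.tendsto 0).comp hx

lemma riccati_identity {n m : ℕ} (K P Q : Matrix (Fin n) (Fin n) ℝ)
    (B : Matrix (Fin n) (Fin m) ℝ) (hP : Pᵀ = P)
    (hric : 0 = Kᵀ * P + P * K - P * B * Bᵀ * P + Q) (x : Fin n → ℝ) (u : Fin m → ℝ) :
    (K *ᵥ x + B *ᵥ u) ⬝ᵥ P *ᵥ x + x ⬝ᵥ P *ᵥ (K *ᵥ x + B *ᵥ u) =
      (u + Bᵀ *ᵥ (P *ᵥ x)) ⬝ᵥ (u + Bᵀ *ᵥ (P *ᵥ x)) - (x ⬝ᵥ Q *ᵥ x + u ⬝ᵥ u) := by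
  have h0 := congrArg (fun R : Matrix (Fin n) (Fin n) ℝ => x ⬝ᵥ R *ᵥ x) hric
  have hs : ∀ v w : Fin n → ℝ, v ⬝ᵥ P *ᵥ w = (P *ᵥ v) ⬝ᵥ w := by
    intro v w
    rw [Matrix.dotProduct_mulVec, ← Matrix.mulVec_transpose, hP]
  have hB : ∀ (v : Fin n → ℝ) (w : Fin m → ℝ), (Bᵀ *ᵥ v) ⬝ᵥ w = v ⬝ᵥ B *ᵥ w := by
    intro v w
    rw [Matrix.dotProduct_mulVec, ← Matrix.mulVec_transpose]
  have hK : ∀ v w : Fin n → ℝ, v ⬝ᵥ Kᵀ *ᵥ w = (K *ᵥ v) ⬝ᵥ w := by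
    intro v w
    rw [Matrix.dotProduct_mulVec, ← Matrix.mulVec_transpose, Matrix.transpose_transpose]
  simp only [Matrix.zero_mulVec, dotProduct_zero, Matrix.add_mulVec, Matrix.sub_mulVec,
    dotProduct_add, dotProduct_sub, ← Matrix.mulVec_mulVec, hK] at h0
  have h1 : x ⬝ᵥ P *ᵥ (B *ᵥ (Bᵀ *ᵥ (P *ᵥ x))) = (Bᵀ *ᵥ (P *ᵥ x)) ⬝ᵥ (Bᵀ *ᵥ (P *ᵥ x)) := by
    rw [hs, hB]
  have h2 : x ⬝ᵥ P *ᵥ (B *ᵥ u) = (Bᵀ *ᵥ (P *ᵥ x)) ⬝ᵥ u := by rw [hs, hB]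
  have h3 : (B *ᵥ u) ⬝ᵥ P *ᵥ x = (Bᵀ *ᵥ (P *ᵥ x)) ⬝ᵥ u := by rw [dotProduct_comm, hB]
  have h4 : u ⬝ᵥ (Bᵀ *ᵥ (P *ᵥ x)) = (Bᵀ *ᵥ (P *ᵥ x)) ⬝ᵥ u := dotProduct_comm _ _
  simp only [Matrix.mulVec_add, dotProduct_add, add_dotProduct, h2, h3, h4]
  rw [h1] at h0
  linarith

lemma self_dot_nonneg {m : ℕ} (u : Fin m → ℝ) : 0 ≤ u ⬝ᵥ u :=
  Finset.sum_nonneg fun k _ => mul_self_nonneg (u k)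

lemma equilibrium_cost {n m : ℕ} (K P Q : Matrix (Fin n) (Fin n) ℝ)
    (B : Matrix (Fin n) (Fin m) ℝ) (hP : Pᵀ = P) (hQ : Q.PosSemidef)
    (hric : 0 = Kᵀ * P + P * K - P * B * Bᵀ * P + Q) (x : ℝ → Fin n → ℝ)
    (hx : ∀ t : ℝ, 0 ≤ t → HasDerivAt x (K *ᵥ x t + B *ᵥ (-(Bᵀ *ᵥ (P *ᵥ x t)))) t)
    (hlim : Tendsto x atTop (nhds 0)) :
    (∫ t in Set.Ioi (0 : ℝ), (x t ⬝ᵥ Q *ᵥ x t +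
      (-(Bᵀ *ᵥ (P *ᵥ x t))) ⬝ᵥ (-(Bᵀ *ᵥ (P *ᵥ x t))))) = x 0 ⬝ᵥ P *ᵥ x 0 := by
  have hd : ∀ t : ℝ, 0 ≤ t → HasDerivAt (fun t => -(x t ⬝ᵥ P *ᵥ x t))
      (x t ⬝ᵥ Q *ᵥ x t + (-(Bᵀ *ᵥ (P *ᵥ x t))) ⬝ᵥ (-(Bᵀ *ᵥ (P *ᵥ x t)))) t := by
    intro t ht
    have h1 := (quad_deriv P x _ t (hx t ht)).fun_neg
    rw [riccati_identity K P Q B hP hric] at h1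
    simpa using h1
  have := integral_Ioi_of_hasDerivAt_of_nonneg (hd 0 le_rfl).continuousAt.continuousWithinAt
    (fun t ht => hd t (le_of_lt ht)) (fun t _ => ?_) (quad_tendsto P x hlim).neg
  · simpa using this
  · have h1 := hQ.dotProduct_mulVec_nonneg (x t)
    simp only [star_trivial] at h1
    exact add_nonneg h1 (self_dot_nonneg _)

lemma deviation_cost {n m : ℕ} (K P Q : Matrix (Fin n) (Fin n) ℝ)
    (B : Matrix (Fin n) (Fin m) ℝ) (hP : Pᵀ = P)
    (hric : 0 = Kᵀ * P + P * K - P * B * Bᵀ * P + Q) (u : ℝ → Fin m → ℝ) (x : ℝ → Fin n → ℝ)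
    (hx : ∀ t : ℝ, 0 ≤ t → HasDerivAt x (K *ᵥ x t + B *ᵥ u t) t)
    (hlim : Tendsto x atTop (nhds 0))
    (hint : IntegrableOn (fun t : ℝ => x t ⬝ᵥ Q *ᵥ x t + u t ⬝ᵥ u t) (Set.Ioi 0)) :
    x 0 ⬝ᵥ P *ᵥ x 0 ≤ ∫ t in Set.Ioi (0 : ℝ), (x t ⬝ᵥ Q *ᵥ x t + u t ⬝ᵥ u t) := by
  have hd : ∀ t : ℝ, 0 ≤ t → HasDerivAt (fun t => -(x t ⬝ᵥ P *ᵥ x t)) _ t :=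
    fun t ht => (quad_deriv P x _ t (hx t ht)).fun_neg
  have hT : ∀ T : ℝ, 0 ≤ T → x 0 ⬝ᵥ P *ᵥ x 0 - x T ⬝ᵥ P *ᵥ x T ≤
      ∫ t in (0 : ℝ)..T, (x t ⬝ᵥ Q *ᵥ x t + u t ⬝ᵥ u t) := by
    intro T hT
    have := intervalIntegral.sub_le_integral_of_hasDeriv_right_of_le hT
      (fun t ht => (hd t ht.1).continuousAt.continuousWithinAt)
      (fun t ht => (hd t ht.1.le).hasDerivWithinAt)
      (φ := fun t => x t ⬝ᵥ Q *ᵥ x t + u t ⬝ᵥ u t)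
      ((integrableOn_Icc_iff_integrableOn_Ioc (by simp)).2 (hint.mono_set Set.Ioc_subset_Ioi_self))
      (fun t ht => by
        rw [riccati_identity K P Q B hP hric]
        have := self_dot_nonneg (u t + Bᵀ *ᵥ (P *ᵥ x t))
        linarith)
    linarith
  have h1 := intervalIntegral_tendsto_integral_Ioi 0 hint tendsto_id
  have h2 : Tendsto (fun T => x 0 ⬝ᵥ P *ᵥ x 0 - x T ⬝ᵥ P *ᵥ x T) atTop
      (nhds (x 0 ⬝ᵥ P *ᵥ x 0)) := by
    simpa using (quad_tendsto P x hlim).const_sub (x 0 ⬝ᵥ P *ᵥ x 0)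
  refine le_of_tendsto_of_tendsto h2 h1 ?_
  filter_upwards [eventually_ge_atTop 0] with T h using hT T h

/-- for the two-player linear-quadratic game `ẋ = A x + B_i u_i + B_j u_j`,
`J_k = ∫₀^∞ (xᵀ Q_k x + u_kᵀ u_k)` with `Q_i, Q_j` symmetric positive semidefinite, if
`P_i, P_j` are symmetric solutions of the coupled algebraic Riccati equations and the closed
loop `A − B_i B_iᵀ P_i − B_j B_jᵀ P_j` is Hurwitz, then the feedback policies
`u_k* = −B_kᵀ P_k x` form a Nash equilibrium among asymptotically vanishing responses: along
the closed-loop trajectory each player's cost equals `x₀ᵀ P_k x₀`, and any unilateral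
deviation by player `k` (against `u_{−k}*`) whose trajectory vanishes at infinity with
convergent cost integral has cost at least `x₀ᵀ P_k x₀`. -/
theorem coupled_riccati_nash_equilibrium
    {n m : ℕ} (A : Matrix (Fin n) (Fin n) ℝ)
    (B_i B_j : Matrix (Fin n) (Fin m) ℝ)
    (Q_i Q_j P_i P_j : Matrix (Fin n) (Fin n) ℝ)
    (hQi : Q_i.PosSemidef) (hQj : Q_j.PosSemidef)
    (hPi : P_iᵀ = P_i) (hPj : P_jᵀ = P_j)
    (hric_i : 0 = (A - B_j * B_jᵀ * P_j)ᵀ * P_i + P_i * (A - B_j * B_jᵀ * P_j)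
        - P_i * B_i * B_iᵀ * P_i + Q_i)
    (hric_j : 0 = (A - B_i * B_iᵀ * P_i)ᵀ * P_j + P_j * (A - B_i * B_iᵀ * P_i)
        - P_j * B_j * B_jᵀ * P_j + Q_j)
    (hHur : IsHurwitz (A - B_i * B_iᵀ * P_i - B_j * B_jᵀ * P_j))
    (x₀ : Fin n → ℝ) :
    -- the equilibrium (closed-loop) cost of each player is x₀ᵀ P_k x₀
    (∀ xs : ℝ → Fin n → ℝ, xs 0 = x₀ →
      (∀ t : ℝ, 0 ≤ t → HasDerivAt xs
        ((A - B_i * B_iᵀ * P_i - B_j * B_jᵀ * P_j).mulVec (xs t)) t) →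
      (∫ t in Set.Ioi (0 : ℝ), (xs t ⬝ᵥ Q_i.mulVec (xs t) +
          (-(B_iᵀ.mulVec (P_i.mulVec (xs t)))) ⬝ᵥ (-(B_iᵀ.mulVec (P_i.mulVec (xs t))))))
        = x₀ ⬝ᵥ P_i.mulVec x₀ ∧
      (∫ t in Set.Ioi (0 : ℝ), (xs t ⬝ᵥ Q_j.mulVec (xs t) +
          (-(B_jᵀ.mulVec (P_j.mulVec (xs t)))) ⬝ᵥ (-(B_jᵀ.mulVec (P_j.mulVec (xs t))))))
        = x₀ ⬝ᵥ P_j.mulVec x₀) ∧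
    -- unilateral deviations of player i against u_j* cannot do better
    (∀ (u_i : ℝ → Fin m → ℝ) (x : ℝ → Fin n → ℝ), Continuous u_i → x 0 = x₀ →
      (∀ t : ℝ, 0 ≤ t → HasDerivAt x
        (A.mulVec (x t) + B_i.mulVec (u_i t) +
          B_j.mulVec (-(B_jᵀ.mulVec (P_j.mulVec (x t))))) t) →
      Tendsto x atTop (nhds 0) →
      IntegrableOn (fun t : ℝ => x t ⬝ᵥ Q_i.mulVec (x t) + u_i t ⬝ᵥ u_i t) (Set.Ioi 0) →
      x₀ ⬝ᵥ P_i.mulVec x₀ ≤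
        ∫ t in Set.Ioi (0 : ℝ), (x t ⬝ᵥ Q_i.mulVec (x t) + u_i t ⬝ᵥ u_i t)) ∧
    -- unilateral deviations of player j against u_i* cannot do better
    (∀ (u_j : ℝ → Fin m → ℝ) (x : ℝ → Fin n → ℝ), Continuous u_j → x 0 = x₀ →
      (∀ t : ℝ, 0 ≤ t → HasDerivAt x
        (A.mulVec (x t) + B_j.mulVec (u_j t) +
          B_i.mulVec (-(B_iᵀ.mulVec (P_i.mulVec (x t))))) t) →
      Tendsto x atTop (nhds 0) →
      IntegrableOn (fun t : ℝ => x t ⬝ᵥ Q_j.mulVec (x t) + u_j t ⬝ᵥ u_j t) (Set.Ioi 0) →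
      x₀ ⬝ᵥ P_j.mulVec x₀ ≤
        ∫ t in Set.Ioi (0 : ℝ), (x t ⬝ᵥ Q_j.mulVec (x t) + u_j t ⬝ᵥ u_j t)) := by
  refine ⟨fun xs h0 hx => ?_, ?_, ?_⟩
  · have hlim := hurwitz_decay _ hHur xs hx
    subst h0
    refine ⟨equilibrium_cost _ P_i Q_i B_i hPi hQi hric_i xs (fun t ht => ?_) hlim,
      equilibrium_cost _ P_j Q_j B_j hPj hQj hric_j xs (fun t ht => ?_) hlim⟩
    · refine (hx t ht).congr_deriv ?_
      simp only [Matrix.sub_mulVec, ← Matrix.mulVec_mulVec, Matrix.mulVec_neg]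
      abel
    · refine (hx t ht).congr_deriv ?_
      simp only [Matrix.sub_mulVec, ← Matrix.mulVec_mulVec, Matrix.mulVec_neg]
      abel
  · intro u x _ h0 hx hlim hint
    subst h0
    refine deviation_cost _ P_i Q_i B_i hPi hric_i u x (fun t ht => ?_) hlim hint
    refine (hx t ht).congr_deriv ?_
    simp only [Matrix.sub_mulVec, ← Matrix.mulVec_mulVec, Matrix.mulVec_neg]
    abel
  · intro u x _ h0 hx hlim hint
    subst h0
    refine deviation_cost _ P_j Q_j B_j hPj hric_j u x (fun t ht => ?_) hlim hint
    refine (hx t ht).congr_deriv ?_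
    simp only [Matrix.sub_mulVec, ← Matrix.mulVec_mulVec, Matrix.mulVec_neg]
    abel
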